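/- arXiv:math/0703203 — 2 statements merged into one kernel-verified Lean document; each statement's English description precedes it below -/
import Mathlib

section
/- Fix m ≥ 1, a permutation σ of {1,…,m}, and nonnegative integer vectors p, r with p₁+⋯+p_m = r₁+⋯+r_m = n. Consider the map that sends a sequence α of length n to the sequence obtained by listing, for each height h = 1, 2, …, m in increasing order, all steps of α whose starting height is h, in their original left-to-right order. This map restricts to a bijection from 𝒫^σ(p;r) onto 𝒪(p;r), where 𝒪(p;r) denotes ordered sequences with respect to the identity permutation; in particular the two sets have the same cardinality. -/
/-!
Statement 2: the map sending a sequence to the list of its steps sorted (stably) by starting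
height restricts to a bijection from the path sequences `𝒫^σ(p;r)` onto the ordered
sequences `𝒪(p;r)` (with respect to the identity permutation); in particular the two sets
have the same cardinality.
-/

variable {m : ℕ}

/-- A sequence (list of steps `(i,j)`) has type `(p;r)` if `p h` counts steps with starting
height `h` and `r h` counts steps with ending height `h`. -/
def HasType (p r : Fin m → ℕ) (α : List (Fin m × Fin m)) : Prop :=
  (∀ h, (α.map Prod.fst).count h = p h) ∧ (∀ h, (α.map Prod.snd).count h = r h)

/-- An ordered sequence with respect to `π`: the `π`-preimages of the starting heights are
weakly increasing. -/
def IsOrderedSeq (π : Equiv.Perm (Fin m)) (α : List (Fin m × Fin m)) : Prop :=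
  α.Chain' fun s t => π.symm s.1 ≤ π.symm t.1

/-- A (nonempty) lattice path: each step starts at the ending point of the previous step. -/
def IsLatticePath (α : List (Fin m × Fin m)) : Prop :=
  α ≠ [] ∧ α.Chain' fun s t => s.2 = t.1

/-- A path sequence with respect to `σ`: a concatenation of lattice paths such that for each
constituent path, the `σ`-preimage of its starting height is minimal among the starting heights
of all steps from that point on, and its ending height does not occur as a starting height of
any later step. -/
def IsPathSeq (σ : Equiv.Perm (Fin m)) (α : List (Fin m × Fin m)) : Prop :=
  ∃ L : List (List (Fin m × Fin m)), α = L.flatten ∧ (∀ P ∈ L, IsLatticePath P) ∧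
    ∀ u : Fin L.length,
      (∀ f ∈ (L.get u).head?, ∀ t ∈ (L.drop (u : ℕ)).flatten, σ.symm f.1 ≤ σ.symm t.1) ∧
      (∀ g ∈ (L.get u).getLast?, ∀ t ∈ (L.drop ((u : ℕ) + 1)).flatten, t.1 ≠ g.2)

/-- The map listing, for each height `h = 1, 2, …, m` in increasing order, all steps of `α`
whose starting height is `h`, in their original left-to-right order. -/
def sortBySource (α : List (Fin m × Fin m)) : List (Fin m × Fin m) :=
  (List.finRange m).flatMap fun h => α.filter fun s => s.1 = h

/-!
Cut a sequence into stacks, one for each height, holding the steps that start there in their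
order of appearance. A selection rule that names the starting height of the next step from the
previous ending height and the set of starting heights still available rebuilds exactly one
sequence from given stacks. Ordered sequences are those built by always taking the smallest
available height. Path sequences are those built by continuing at the previous ending height if it
is available, and otherwise taking the available height that `σ` lists first. Since `sortBySource`
keeps every stack and returns an ordered sequence, it matches the two families.
-/

section Stacks

variable {ι κ : Type*} [DecidableEq ι]

/-- The stack of a sequence of steps at height `h`: its steps starting at `h`, in order. -/
def stackAt (α : List (ι × κ)) (h : ι) : List (ι × κ) :=
  α.filter fun s => s.1 = h

/-- The set of starting heights of the steps of a sequence. -/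
def sources (α : List (ι × κ)) : Finset ι :=
  (α.map Prod.fst).toFinset

lemma mem_stackAt {α : List (ι × κ)} {h : ι} {s : ι × κ} :
    s ∈ stackAt α h ↔ s ∈ α ∧ s.1 = h := by
  simp [stackAt]

lemma forall_mem_sources {α : List (ι × κ)} {Q : ι → Prop} :
    (∀ h ∈ sources α, Q h) ↔ ∀ s ∈ α, Q s.1 := by
  simp only [sources, List.mem_toFinset, List.forall_mem_map]

lemma notMem_sources {α : List (ι × κ)} {h : ι} : h ∉ sources α ↔ ∀ s ∈ α, s.1 ≠ h :=
  Finset.forall_mem_not_eq'.symm.trans forall_mem_sources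

lemma fst_mem_sources {α : List (ι × κ)} {s : ι × κ} (hs : s ∈ α) : s.1 ∈ sources α :=
  forall_mem_sources.1 (fun _ => id) s hs

lemma stackAt_append (α β : List (ι × κ)) (h : ι) :
    stackAt (α ++ β) h = stackAt α h ++ stackAt β h :=
  List.filter_append ..

lemma stackAt_cons_self (s : ι × κ) (α : List (ι × κ)) :
    stackAt (s :: α) s.1 = s :: stackAt α s.1 :=
  List.filter_cons_of_pos (by simp)

lemma stackAt_cons_of_ne {s : ι × κ} {h : ι} (hs : s.1 ≠ h) (α : List (ι × κ)) :
    stackAt (s :: α) h = stackAt α h :=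
  List.filter_cons_of_neg (by simpa using hs)

lemma stackAt_cons_congr (s : ι × κ) {α β : List (ι × κ)} (hαβ : stackAt α = stackAt β) :
    stackAt (s :: α) = stackAt (s :: β) := by
  funext h
  by_cases hs : s.1 = h
  · subst hs
    rw [stackAt_cons_self, stackAt_cons_self, hαβ]
  · rw [stackAt_cons_of_ne hs, stackAt_cons_of_ne hs, hαβ]

lemma eq_and_stackAt_eq_of_stackAt_cons_eq {s t : ι × κ} {α β : List (ι × κ)} (hst : s.1 = t.1)
    (h : stackAt (s :: α) = stackAt (t :: β)) : s = t ∧ stackAt α = stackAt β := by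
  have hcons : s :: stackAt α s.1 = t :: stackAt β t.1 := by
    rw [← stackAt_cons_self, ← stackAt_cons_self, h, hst]
  obtain ⟨rfl, htail⟩ := List.cons_eq_cons.1 hcons
  refine ⟨rfl, funext fun k => ?_⟩
  by_cases hk : s.1 = k
  · exact hk ▸ htail
  · rw [← stackAt_cons_of_ne hk α, ← stackAt_cons_of_ne hk β, h]

lemma perm_of_stackAt_eq {α β : List (ι × κ)} (h : stackAt α = stackAt β) : α.Perm β := by
  classical
  rw [List.perm_iff_count]
  intro s
  have hcount (γ : List (ι × κ)) : (stackAt γ s.1).count s = γ.count s :=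
    List.count_filter (by simp)
  rw [← hcount α, ← hcount β, h]

lemma sources_eq_of_stackAt_eq {α β : List (ι × κ)} (h : stackAt α = stackAt β) :
    sources α = sources β :=
  List.toFinset_eq_of_perm _ _ ((perm_of_stackAt_eq h).map _)

lemma exists_stackAt_cons_eq_of_mem_sources {γ : List (ι × κ)} {h : ι} (hh : h ∈ sources γ) :
    ∃ s β, s.1 = h ∧ stackAt (s :: β) = stackAt γ := by
  obtain ⟨t, ht, rfl⟩ := List.mem_map.1 (List.mem_toFinset.1 hh)
  obtain ⟨s, γ₁, γ₂, hγ₁, hs, rfl, -⟩ :=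
    List.exists_of_eraseP (p := fun u : ι × κ => u.1 = t.1) ht (by simp)
  simp only [decide_eq_true_eq] at hγ₁ hs
  refine ⟨s, γ₁ ++ γ₂, hs, funext fun k => ?_⟩
  by_cases hk : s.1 = k
  · have hnil : stackAt γ₁ k = [] :=
      List.filter_eq_nil_iff.2 fun u hu => by simpa [← hk, hs] using hγ₁ u hu
    subst hk
    rw [stackAt_cons_self, stackAt_append, stackAt_append, stackAt_cons_self, hnil]
    rfl
  · rw [stackAt_cons_of_ne hk, stackAt_append, stackAt_append, stackAt_cons_of_ne hk]

lemma stackAt_stackAt_self (α : List (ι × κ)) (h : ι) : stackAt (stackAt α h) h = stackAt α h :=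
  List.filter_eq_self.2 fun _ hs => decide_eq_true (mem_stackAt.1 hs).2

lemma stackAt_stackAt_of_ne (α : List (ι × κ)) {h k : ι} (hk : k ≠ h) :
    stackAt (stackAt α k) h = [] :=
  List.filter_eq_nil_iff.2 fun _ hs => by simpa [(mem_stackAt.1 hs).2] using hk

lemma stackAt_flatMap_stackAt_of_notMem (α : List (ι × κ)) {l : List ι} {h : ι} (hl : h ∉ l) :
    stackAt (l.flatMap (stackAt α)) h = [] := by
  induction l with
  | nil => rfl
  | cons k l ih =>
    rw [List.mem_cons, not_or] at hl
    rw [List.flatMap_cons, stackAt_append, stackAt_stackAt_of_ne α (Ne.symm hl.1), ih hl.2]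
    rfl

lemma stackAt_flatMap_stackAt_of_mem (α : List (ι × κ)) {l : List ι} (hl : l.Nodup) {h : ι}
    (hh : h ∈ l) : stackAt (l.flatMap (stackAt α)) h = stackAt α h := by
  induction l with
  | nil => exact absurd hh List.not_mem_nil
  | cons k l ih =>
    rw [List.nodup_cons] at hl
    rw [List.flatMap_cons, stackAt_append]
    obtain rfl | hh := List.mem_cons.1 hh
    · rw [stackAt_stackAt_self, stackAt_flatMap_stackAt_of_notMem α hl.1, List.append_nil]
    · have hk : k ≠ h := fun hkh => hl.1 (hkh ▸ hh)
      rw [stackAt_stackAt_of_ne α hk, ih hl.2 hh, List.nil_append]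

lemma pairwise_flatMap_stackAt [Preorder ι] (α : List (ι × κ)) {l : List ι}
    (hl : l.Pairwise (· ≤ ·)) :
    (l.flatMap (stackAt α)).Pairwise fun s t => s.1 ≤ t.1 := by
  refine List.pairwise_flatMap.2 ⟨fun h _ => ?_, hl.imp fun {h k} hhk s hs t ht => ?_⟩
  · refine List.pairwise_of_forall_mem_list fun s hs t ht => ?_
    rw [(mem_stackAt.1 hs).2, (mem_stackAt.1 ht).2]
  · rwa [(mem_stackAt.1 hs).2, (mem_stackAt.1 ht).2]

end Stacks

section SelectionRules

variable {ι κ : Type*}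

/-- Read `R c S h` as follows: after a step ending at `c` (`none` at the beginning), when `S` is the
set of starting heights of the remaining steps, the next step starts at `h`. Such a relation is a
selection rule if it determines `h ∈ S` whenever `S` is nonempty. -/
def IsSelectionRule (R : Option κ → Finset ι → ι → Prop) : Prop :=
  ∀ c S, S.Nonempty → ∃! h, h ∈ S ∧ R c S h

/-- The sequence `α`, placed after a step ending at `c` (`none` at the beginning), has all its
starting heights prescribed by the selection rule `R`. -/
def Follows [DecidableEq ι] (R : Option κ → Finset ι → ι → Prop) :
    Option κ → List (ι × κ) → Prop
  | _, [] => True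
  | c, s :: α => R c (sources (s :: α)) s.1 ∧ Follows R (some s.2) α

namespace IsSelectionRule

variable [DecidableEq ι] {R R' : Option κ → Finset ι → ι → Prop}

lemma eq_of_follows (hR : IsSelectionRule R) {c : Option κ} {α β : List (ι × κ)}
    (hα : Follows R c α) (hβ : Follows R c β) (h : stackAt α = stackAt β) : α = β := by
  induction α generalizing c β with
  | nil => exact (perm_of_stackAt_eq h).nil_eq
  | cons s α ih =>
    cases β with
    | nil => exact (perm_of_stackAt_eq h).eq_nil
    | cons t β =>
      have hs : s.1 ∈ sources (s :: α) := fst_mem_sources List.mem_cons_self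
      have ht : t.1 ∈ sources (t :: β) := fst_mem_sources List.mem_cons_self
      have hsources := sources_eq_of_stackAt_eq h
      have hst : s.1 = t.1 :=
        (hR c _ ⟨s.1, hs⟩).unique ⟨hs, hα.1⟩ (hsources ▸ ⟨ht, hβ.1⟩)
      obtain ⟨rfl, htail⟩ := eq_and_stackAt_eq_of_stackAt_cons_eq hst h
      rw [ih hα.2 hβ.2 htail]

lemma exists_follows (hR : IsSelectionRule R) (c : Option κ) (γ : List (ι × κ)) :
    ∃ α, Follows R c α ∧ stackAt α = stackAt γ := by
  induction hn : γ.length generalizing c γ with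
  | zero => exact ⟨[], trivial, by rw [List.length_eq_zero_iff.1 hn]⟩
  | succ n ih =>
    obtain ⟨u, hu⟩ := List.exists_mem_of_length_pos (by omega : 0 < γ.length)
    obtain ⟨h, ⟨hh, hRh⟩, -⟩ := hR c (sources γ) ⟨u.1, fst_mem_sources hu⟩
    obtain ⟨s, β, rfl, hβ⟩ := exists_stackAt_cons_eq_of_mem_sources hh
    have hlen : β.length = n := by
      have := (perm_of_stackAt_eq hβ).length_eq
      rw [List.length_cons] at this
      omega
    obtain ⟨α, hα, hαβ⟩ := ih (some s.2) β hlen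
    have hγ : stackAt (s :: α) = stackAt γ := (stackAt_cons_congr s hαβ).trans hβ
    exact ⟨s :: α, ⟨sources_eq_of_stackAt_eq hγ ▸ hRh, hα⟩, hγ⟩

theorem bijOn_follows (hR : IsSelectionRule R) (hR' : IsSelectionRule R') {c c' : Option κ}
    {f : List (ι × κ) → List (ι × κ)} (hf : ∀ α, Follows R' c' (f α))
    (hstackAt : ∀ α, stackAt (f α) = stackAt α) :
    Set.BijOn f {α | Follows R c α} {α | Follows R' c' α} := by
  refine ⟨fun α _ => hf α, fun α hα β hβ hαβ => ?_, fun γ hγ => ?_⟩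
  · exact hR.eq_of_follows hα hβ (by rw [← hstackAt α, hαβ, hstackAt])
  · obtain ⟨α, hα, hαγ⟩ := hR.exists_follows c γ
    exact ⟨α, hα, hR'.eq_of_follows (hf α) hγ ((hstackAt α).trans hαγ)⟩

end IsSelectionRule

variable {β : Type*}

/-- The selection rule that always starts at an available height of smallest rank, whatever the
previous step. -/
def minRule [LE β] (rank : ι → β) (_ : Option κ) (S : Finset ι) (h : ι) : Prop :=
  ∀ k ∈ S, rank h ≤ rank k

/-- The selection rule that continues at the previous ending height if it is available, and
otherwise starts at an available height of smallest rank. -/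
def pathRule [LE β] (rank : ι → β) (c : Option ι) (S : Finset ι) (h : ι) : Prop :=
  h ∈ c ∨ (∀ x ∈ c, x ∉ S) ∧ minRule rank c S h

lemma isSelectionRule_minRule [LinearOrder β] {rank : ι → β} (hrank : rank.Injective) :
    IsSelectionRule (minRule (κ := κ) rank) := by
  intro _ S hS
  obtain ⟨h, hh, hmin⟩ := S.exists_min_image rank hS
  exact ⟨h, ⟨hh, hmin⟩, fun k ⟨hk, hkmin⟩ => hrank ((hkmin h hh).antisymm (hmin k hk))⟩

lemma isSelectionRule_pathRule [LinearOrder β] {rank : ι → β} (hrank : rank.Injective) :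
    IsSelectionRule (pathRule rank) := by
  intro c S hS
  by_cases hc : ∃ x ∈ c, x ∈ S
  · obtain ⟨x, hxc, hxS⟩ := hc
    refine ⟨x, ⟨hxS, .inl hxc⟩, ?_⟩
    rintro k ⟨-, hkc | ⟨hdead, -⟩⟩
    · exact Option.mem_unique hkc hxc
    · exact absurd hxS (hdead x hxc)
  · push Not at hc
    obtain ⟨h, ⟨hh, hmin⟩, huniq⟩ := isSelectionRule_minRule hrank c S hS
    refine ⟨h, ⟨hh, .inr ⟨hc, hmin⟩⟩, ?_⟩
    rintro k ⟨hk, hkc | ⟨-, hkmin⟩⟩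
    · exact absurd hk (hc k hkc)
    · exact huniq k ⟨hk, hkmin⟩

variable [DecidableEq ι]

lemma follows_minRule_iff_pairwise [Preorder β] {rank : ι → β} {c : Option κ}
    {α : List (ι × κ)} :
    Follows (minRule rank) c α ↔ α.Pairwise fun s t => rank s.1 ≤ rank t.1 := by
  induction α generalizing c with
  | nil => exact iff_of_true trivial .nil
  | cons s α ih =>
    rw [Follows, ih, List.pairwise_cons, minRule, forall_mem_sources, List.forall_mem_cons,
      and_iff_right le_rfl]

lemma follows_pathRule_append [LE β] {rank : ι → β} {α : List (ι × ι)}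
    (hα : ∀ c : Option ι, (∀ x ∈ c, x ∉ sources α) → Follows (pathRule rank) c α)
    {s : ι × ι} {P : List (ι × ι)} (hP : (s :: P).IsChain fun s t => s.2 = t.1)
    (hlast : ((s :: P).getLast (List.cons_ne_nil s P)).2 ∉ sources α) :
    Follows (pathRule rank) (some s.2) (P ++ α) := by
  induction P generalizing s with
  | nil => exact hα _ (by simpa using hlast)
  | cons t P ih =>
    rw [List.isChain_cons_cons] at hP
    exact ⟨.inl (congrArg some hP.1), ih hP.2 (by simpa using hlast)⟩

end SelectionRules

section PathSequences

/-- The conditions imposed by `IsPathSeq` on the list of constituent paths. -/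
def IsPathDecomposition (σ : Equiv.Perm (Fin m)) (L : List (List (Fin m × Fin m))) : Prop :=
  (∀ P ∈ L, IsLatticePath P) ∧
    ∀ u : Fin L.length,
      (∀ f ∈ (L.get u).head?, ∀ t ∈ (L.drop (u : ℕ)).flatten, σ.symm f.1 ≤ σ.symm t.1) ∧
      (∀ g ∈ (L.get u).getLast?, ∀ t ∈ (L.drop ((u : ℕ) + 1)).flatten, t.1 ≠ g.2)

variable {σ : Equiv.Perm (Fin m)} {c : Option (Fin m)} {α P : List (Fin m × Fin m)}
  {L : List (List (Fin m × Fin m))} {s : Fin m × Fin m}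

lemma isPathDecomposition_nil : IsPathDecomposition σ [] :=
  ⟨List.forall_mem_nil _, fun u => u.elim0⟩

lemma isPathDecomposition_cons :
    IsPathDecomposition σ ((s :: P) :: L) ↔
      (s :: P).IsChain (fun s t => s.2 = t.1) ∧
      minRule σ.symm c (sources (s :: (P ++ L.flatten))) s.1 ∧
      ((s :: P).getLast (List.cons_ne_nil s P)).2 ∉ sources L.flatten ∧
      IsPathDecomposition σ L := by
  have hpath : IsLatticePath (s :: P) ↔ (s :: P).IsChain fun s t => s.2 = t.1 :=
    and_iff_right (List.cons_ne_nil s P)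
  rw [minRule, forall_mem_sources, notMem_sources, IsPathDecomposition, List.forall_mem_cons, hpath]
  refine Iff.trans (and_congr_right' Fin.forall_fin_succ) ?_
  simp only [List.get_eq_getElem, Fin.val_zero, Fin.val_succ, List.getElem_cons_zero,
    List.getElem_cons_succ, List.drop_zero, List.drop_succ_cons, List.head?_cons,
    List.getLast?_eq_some_getLast (List.cons_ne_nil s P), Option.mem_some_iff, forall_eq',
    List.flatten_cons, List.cons_append, IsPathDecomposition]
  tauto

lemma IsPathDecomposition.follows (hL : IsPathDecomposition σ L)
    (hc : ∀ x ∈ c, x ∉ sources L.flatten) : Follows (pathRule σ.symm) c L.flatten := by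
  induction L generalizing c with
  | nil => trivial
  | cons P L ih =>
    cases P with
    | nil => exact absurd rfl (hL.1 [] List.mem_cons_self).1
    | cons s P =>
      obtain ⟨hP, hmin, hlast, hL⟩ := isPathDecomposition_cons.1 hL
      exact ⟨.inr ⟨hc, hmin⟩, follows_pathRule_append (fun _ => ih hL) hP hlast⟩

/-- The steps `P` are those completing the path to which `s` belongs. -/
lemma exists_isPathDecomposition_of_follows (hα : Follows (pathRule σ.symm) (some s.2) α) :
    ∃ P L, α = P ++ L.flatten ∧ (s :: P).IsChain (fun s t => s.2 = t.1) ∧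
      ((s :: P).getLast (List.cons_ne_nil s P)).2 ∉ sources L.flatten ∧
      IsPathDecomposition σ L := by
  induction α generalizing s with
  | nil => exact ⟨[], [], rfl, .singleton s, Finset.notMem_empty _, isPathDecomposition_nil⟩
  | cons t α ih =>
    obtain ⟨hrule, hα⟩ := hα
    obtain ⟨P, L, rfl, hP, hlast, hL⟩ := ih hα
    obtain hcontinue | ⟨hdead, hmin⟩ := hrule
    · refine ⟨t :: P, L, rfl, ?_, by simpa using hlast, hL⟩
      exact List.isChain_cons_cons.2 ⟨Option.some.inj hcontinue, hP⟩
    · exact ⟨[], (t :: P) :: L, rfl, .singleton s, hdead s.2 rfl,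
        isPathDecomposition_cons.2 ⟨hP, hmin, hlast, hL⟩⟩

theorem isPathSeq_iff_follows : IsPathSeq σ α ↔ Follows (pathRule σ.symm) none α := by
  constructor
  · rintro ⟨L, rfl, hL⟩
    exact IsPathDecomposition.follows hL (by simp)
  · intro hα
    cases α with
    | nil => exact ⟨[], rfl, isPathDecomposition_nil⟩
    | cons s α =>
      obtain ⟨hrule, hα⟩ := hα
      have hmin : minRule σ.symm none (sources (s :: α)) s.1 := (hrule.resolve_left nofun).2
      obtain ⟨P, L, rfl, hP, hlast, hL⟩ := exists_isPathDecomposition_of_follows hα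
      exact ⟨(s :: P) :: L, rfl, isPathDecomposition_cons.2 ⟨hP, hmin, hlast, hL⟩⟩

theorem isOrderedSeq_iff_follows : IsOrderedSeq σ α ↔ Follows (minRule σ.symm) c α := by
  have : IsTrans (Fin m × Fin m) fun s t => σ.symm s.1 ≤ σ.symm t.1 := ⟨fun _ _ _ => le_trans⟩
  exact List.isChain_iff_pairwise.trans follows_minRule_iff_pairwise.symm

end PathSequences

lemma stackAt_sortBySource (α : List (Fin m × Fin m)) : stackAt (sortBySource α) = stackAt α :=
  funext fun h => stackAt_flatMap_stackAt_of_mem α (List.nodup_finRange m) (List.mem_finRange h)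

lemma isOrderedSeq_one_sortBySource (α : List (Fin m × Fin m)) :
    IsOrderedSeq 1 (sortBySource α) :=
  (pairwise_flatMap_stackAt α (List.pairwise_le_finRange m)).isChain

lemma hasType_iff_of_perm {p r : Fin m → ℕ} {α β : List (Fin m × Fin m)} (h : α.Perm β) :
    HasType p r α ↔ HasType p r β := by
  simp only [HasType, (h.map _).count_eq]

theorem sortBySource_bijOn_isPathSeq (σ : Equiv.Perm (Fin m)) :
    Set.BijOn sortBySource {α | IsPathSeq σ α} {α | IsOrderedSeq 1 α} := by
  simp only [isPathSeq_iff_follows, isOrderedSeq_iff_follows (c := none)]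
  exact (isSelectionRule_pathRule σ.symm.injective).bijOn_follows
    (isSelectionRule_minRule (Equiv.injective _))
    (fun α => isOrderedSeq_iff_follows.1 (isOrderedSeq_one_sortBySource α)) stackAt_sortBySource

theorem sortBySource_bijOn_pathSeq (hm : 1 ≤ m) (σ : Equiv.Perm (Fin m))
    (p r : Fin m → ℕ) (hpr : ∑ i, p i = ∑ i, r i) :
    Set.BijOn sortBySource
      {α : List (Fin m × Fin m) | HasType p r α ∧ IsPathSeq σ α}
      {α : List (Fin m × Fin m) | HasType p r α ∧ IsOrderedSeq 1 α} ∧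
    Set.ncard {α : List (Fin m × Fin m) | HasType p r α ∧ IsPathSeq σ α} =
      Set.ncard {α : List (Fin m × Fin m) | HasType p r α ∧ IsOrderedSeq 1 α} := by
  have htype (α : List (Fin m × Fin m)) : HasType p r (sortBySource α) ↔ HasType p r α :=
    hasType_iff_of_perm (perm_of_stackAt_eq (stackAt_sortBySource α))
  have hbij : Set.BijOn sortBySource
      {α : List (Fin m × Fin m) | HasType p r α ∧ IsPathSeq σ α}
      {α : List (Fin m × Fin m) | HasType p r α ∧ IsOrderedSeq 1 α} := by
    simp only [and_comm (a := HasType p r _)]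
    exact (sortBySource_bijOn_isPathSeq σ).inter_mapsTo (fun α => (htype α).2)
      fun α hα => (htype α).1 hα.2
  exact ⟨hbij, hbij.ncard_eq⟩
end

section
/- Let R be a ring (not necessarily commutative), m ≥ 1, and let A = (a_{ij}) be a right-quantum m×m matrix over R. Suppose I − A is invertible over R, with inverse C. Then det(I − A) · det(C) = 1, where det is the column determinant; that is, the column determinant of (I − A)⁻¹ is the inverse of the column determinant of I − A. -/
/-!
Statement 10: for a right-quantum matrix `A` with `I − A` invertible (inverse `C`),
`det(I − A) · det(C) = 1`, where `det` is the column determinant; that is, the column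
determinant of `(I − A)⁻¹` is the inverse of the column determinant of `I − A`.
-/

variable {R : Type*} [Ring R] {m : ℕ}

/-- A matrix is right-quantum if `a_{jk} a_{ik} = a_{ik} a_{jk}` and, for `k ≠ l`,
`a_{ik} a_{jl} − a_{jk} a_{il} = a_{jl} a_{ik} − a_{il} a_{jk}`. -/
def RightQuantum (A : Matrix (Fin m) (Fin m) R) : Prop :=
  (∀ i j k, A j k * A i k = A i k * A j k) ∧
  (∀ i j k l, k ≠ l → A i k * A j l - A j k * A i l = A j l * A i k - A i l * A j k)

/-- The column determinant of a matrix over a (not necessarily commutative) ring: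
`∑_π sgn(π) b_{π(1)1} b_{π(2)2} ⋯ b_{π(m)m}`. -/
def cdet {n : ℕ} (B : Matrix (Fin n) (Fin n) R) : R :=
  ∑ π : Equiv.Perm (Fin n),
    (Equiv.Perm.sign π : ℤ) • ((List.finRange n).map fun k => B (π k) k).prod

/-!
Adjoin to `R` odd variables `φ₁, …, φₘ` which square to zero, anticommute with one another and
commute with `R`. If a row vector `φ B` anticommutes with `φ`, then the product of its entries is
`φ₁ ⋯ φₘ · cdet B`. For `M` right-quantum the entries of `φ M` are again odd variables, so when the
entries of `M C` commute with those of `M` this computation applies to `φ ↦ φ M`, to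
`φ M ↦ (φ M) C` and to `φ ↦ φ (M C)`, and yields `cdet (M C) = cdet M · cdet C`. Finally `1 - A` is
right-quantum together with `A`.
-/

open scoped Matrix TensorProduct

variable {S : Type*} [Ring S]

theorem cdet_map (f : R →+* S) (B : Matrix (Fin m) (Fin m) R) : cdet (B.map f) = f (cdet B) := by
  simp [cdet, map_list_prod, Function.comp_def]

theorem cdet_one : cdet (1 : Matrix (Fin m) (Fin m) R) = 1 := by
  have h := cdet_map (Int.castRingHom R) (1 : Matrix (Fin m) (Fin m) ℤ)
  rw [Matrix.map_one _ (map_zero _) (map_one _)] at h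
  have hdet : cdet (1 : Matrix (Fin m) (Fin m) ℤ) =
      (1 : Matrix (Fin m) (Fin m) ℤ).det := by
    simp only [cdet, Matrix.det_apply, Units.smul_def, Fin.prod_univ_def]
  rw [h, hdet, Matrix.det_one, map_one]

theorem commute_one_apply {ι : Type*} [DecidableEq ι] (i j : ι) (r : R) :
    Commute ((1 : Matrix ι ι R) i j) r := by
  rw [Matrix.one_apply]
  split_ifs
  exacts [Commute.one_left r, Commute.zero_left r]

namespace RightQuantum

theorem map {A : Matrix (Fin m) (Fin m) R} (hA : RightQuantum A) (f : R →+* S) :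
    RightQuantum (A.map f) := by
  refine ⟨fun i j k => ?_, fun i j k l hkl => ?_⟩
  · simp only [Matrix.map_apply, ← map_mul, hA.1 i j k]
  · simp only [Matrix.map_apply, ← map_mul, ← map_sub, hA.2 i j k l hkl]

theorem one_sub {A : Matrix (Fin m) (Fin m) R} (hA : RightQuantum A) : RightQuantum (1 - A) := by
  have commutator_sub (i j k l : Fin m) :
      (1 - A) i k * (1 - A) j l - (1 - A) j l * (1 - A) i k = A i k * A j l - A j l * A i k := by
    simp only [Matrix.sub_apply, sub_mul, mul_sub, (commute_one_apply i k (A j l)).eq,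
      (commute_one_apply j l (A i k)).eq,
      (commute_one_apply i k ((1 : Matrix (Fin m) (Fin m) R) j l)).eq]
    abel
  refine ⟨fun i j k => ?_, fun i j k l hkl => ?_⟩
  · rw [← sub_eq_zero, commutator_sub, hA.1, sub_self]
  · rw [sub_eq_sub_iff_sub_eq_sub, commutator_sub, commutator_sub, ← sub_eq_sub_iff_sub_eq_sub]
    exact hA.2 i j k l hkl

end RightQuantum

theorem vecMul_apply_mul_vecMul_apply {ι κ κ' : Type*} [Fintype ι] {φ : ι → S} {M : Matrix ι κ S}
    (hM : ∀ i j k, Commute (φ i) (M j k)) (N : Matrix ι κ' S) (k : κ) (l : κ') :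
    (φ ᵥ* M) k * (φ ᵥ* N) l = ∑ i, ∑ j, φ i * φ j * (M i k * N j l) := by
  simp only [Matrix.vecMul, dotProduct, Finset.sum_mul_sum]
  refine Finset.sum_congr rfl fun i _ => Finset.sum_congr rfl fun j _ => ?_
  simp only [mul_assoc, (hM j i k).left_comm]

/-- A family of odd (Grassmann) variables: elements of a ring which square to zero and
anticommute. Both conditions are required because `2` need not be cancellable. -/
structure IsGrassmann {ι : Type*} (φ : ι → S) : Prop where
  mul_self : ∀ i, φ i * φ i = 0
  anticomm : ∀ i j, φ i * φ j = -(φ j * φ i)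

namespace IsGrassmann

variable {ι : Type*} {φ : ι → S}

theorem map {T : Type*} [Ring T] (hφ : IsGrassmann φ) (f : S →+* T) :
    IsGrassmann fun i => f (φ i) where
  mul_self i := by rw [← map_mul, hφ.mul_self, map_zero]
  anticomm i j := by rw [← map_mul, hφ.anticomm, map_neg, map_mul]

theorem sum_sum_mul_eq_zero_of_symm (hφ : IsGrassmann φ) (s : Finset ι) {N : ι → ι → S}
    (hN : ∀ i j, N i j = N j i) : ∑ i ∈ s, ∑ j ∈ s, φ i * φ j * N i j = 0 := by
  rw [← Finset.sum_product' s s fun i j => φ i * φ j * N i j]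
  refine Finset.sum_involution (fun p _ => p.swap) (fun p _ => ?_) (fun p _ hp hswap => hp ?_)
    (fun p hp => Finset.mem_product.2 (Finset.mem_product.1 hp).symm) (fun p _ => p.swap_swap)
  · rw [Prod.fst_swap, Prod.snd_swap, hφ.anticomm p.1 p.2, hN p.1 p.2, neg_mul, neg_add_cancel]
  · rw [show p.2 = p.1 from congrArg Prod.fst hswap, hφ.mul_self, zero_mul]

theorem linearCombination_mul_self (hφ : IsGrassmann φ) (v : ι →₀ ℤ) :
    Finsupp.linearCombination ℤ φ v * Finsupp.linearCombination ℤ φ v = 0 := by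
  rw [Finsupp.linearCombination_apply, Finsupp.sum, Finset.sum_mul_sum,
    ← hφ.sum_sum_mul_eq_zero_of_symm v.support (N := fun i j => ((v i * v j : ℤ) : S))
      fun i j => by rw [mul_comm]]
  simp only [smul_mul_smul_comm, zsmul_eq_mul' (_ * _)]

/-- The alternating map `(v₁, …, vₙ) ↦ ∏ₖ ∑ᵢ vₖᵢ φᵢ` attached to odd variables `φ`, obtained from
the universal property of the exterior algebra. -/
noncomputable def prodAlternating (hφ : IsGrassmann φ) (n : ℕ) : (ι →₀ ℤ) [⋀^Fin n]→ₗ[ℤ] S :=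
  (ExteriorAlgebra.lift ℤ ⟨Finsupp.linearCombination ℤ φ,
    hφ.linearCombination_mul_self⟩).toLinearMap.compAlternatingMap (ExteriorAlgebra.ιMulti ℤ n)

theorem prodAlternating_single (hφ : IsGrassmann φ) {n : ℕ} (g : Fin n → ι) :
    hφ.prodAlternating n (fun k => Finsupp.single (g k) 1) = (List.ofFn fun k => φ (g k)).prod := by
  simp [prodAlternating, ExteriorAlgebra.ιMulti_apply, map_list_prod, List.map_ofFn,
    Function.comp_def, Finsupp.linearCombination_single]

theorem prod_eq_zero_of_not_injective (hφ : IsGrassmann φ) {n : ℕ} {g : Fin n → ι}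
    (hg : ¬ Function.Injective g) : (List.ofFn fun k => φ (g k)).prod = 0 := by
  rw [← hφ.prodAlternating_single]
  exact AlternatingMap.map_eq_zero_of_not_injective _ _ fun h =>
    hg (h.of_comp (f := fun i => Finsupp.single i (1 : ℤ)))

theorem prod_perm (hφ : IsGrassmann φ) {n : ℕ} (g : Fin n → ι) (σ : Equiv.Perm (Fin n)) :
    (List.ofFn fun k => φ (g (σ k))).prod =
      (Equiv.Perm.sign σ : ℤ) • (List.ofFn fun k => φ (g k)).prod := by
  rw [← hφ.prodAlternating_single, ← hφ.prodAlternating_single, ← Units.smul_def]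
  exact AlternatingMap.map_perm _ (fun k => Finsupp.single (g k) 1) σ

theorem sum_prod_mul_eq_prod_mul_sum_perm {φ : Fin m → S} (hφ : IsGrassmann φ)
    (w : (Fin m → Fin m) → S) :
    ∑ g : Fin m → Fin m, (List.ofFn fun k => φ (g k)).prod * w g =
      (List.ofFn φ).prod * ∑ σ : Equiv.Perm (Fin m), (Equiv.Perm.sign σ : ℤ) • w σ := by
  rw [Finset.mul_sum]
  symm
  refine Fintype.sum_of_injective (fun σ : Equiv.Perm (Fin m) => (σ : Fin m → Fin m))
    DFunLike.coe_injective _ _ (fun g hg => ?_) fun σ => ?_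
  · have hinj : ¬ Function.Injective g := fun h =>
      hg ⟨Equiv.ofBijective g (Finite.injective_iff_bijective.1 h), rfl⟩
    rw [hφ.prod_eq_zero_of_not_injective hinj, zero_mul]
  · rw [hφ.prod_perm fun k => k, mul_smul_comm, smul_mul_assoc]

variable [Fintype ι]

theorem dotProduct_mul_prod (hφ : IsGrassmann φ) {b : ι → S}
    (h : ∀ i, φ i * (φ ⬝ᵥ b) = -((φ ⬝ᵥ b) * φ i)) {n : ℕ} (g : Fin n → ι) :
    (φ ⬝ᵥ b) * (List.ofFn fun k => φ (g k)).prod =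
      ∑ j, φ j * (List.ofFn fun k => φ (g k)).prod * b j := by
  induction n with
  | zero => simp [dotProduct]
  | succ n ih =>
    simp only [List.ofFn_succ, List.prod_cons]
    set P := (List.ofFn fun k : Fin n => φ (g k.succ)).prod
    calc (φ ⬝ᵥ b) * (φ (g 0) * P)
        = -(φ (g 0) * ((φ ⬝ᵥ b) * P)) := by rw [← mul_assoc, ← mul_assoc, h, neg_mul, neg_neg]
      _ = ∑ j, -(φ (g 0) * (φ j * P * b j)) := by
          rw [ih fun k => g k.succ, Finset.mul_sum, Finset.sum_neg_distrib]
      _ = ∑ j, φ j * (φ (g 0) * P) * b j := by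
          refine Finset.sum_congr rfl fun j _ => ?_
          simp only [← mul_assoc, hφ.anticomm j (g 0), neg_mul]

theorem prod_vecMul_eq_sum {κ : Type*} (hφ : IsGrassmann φ) {B : Matrix ι κ S}
    (h : ∀ i j, φ i * (φ ᵥ* B) j = -((φ ᵥ* B) j * φ i)) {n : ℕ} (c : Fin n → κ) :
    (List.ofFn fun k => (φ ᵥ* B) (c k)).prod =
      ∑ g : Fin n → ι, (List.ofFn fun k => φ (g k)).prod *
        (List.ofFn fun k => B (g k) (c k)).prod := by
  induction n with
  | zero => simp
  | succ n ih =>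
    rw [List.ofFn_succ, List.prod_cons, ih fun k => c k.succ, Finset.mul_sum,
      ← (Fin.consEquiv fun _ => ι).sum_comp, Fintype.sum_prod_type, Finset.sum_comm]
    refine Finset.sum_congr rfl fun g _ => ?_
    rw [← mul_assoc, Matrix.vecMul, hφ.dotProduct_mul_prod (fun i => h i (c 0)), Finset.sum_mul]
    simp [Fin.consEquiv, mul_assoc]

theorem prod_vecMul {φ : Fin m → S} (hφ : IsGrassmann φ) {B : Matrix (Fin m) (Fin m) S}
    (h : ∀ i j, φ i * (φ ᵥ* B) j = -((φ ᵥ* B) j * φ i)) :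
    (List.ofFn (φ ᵥ* B)).prod = (List.ofFn φ).prod * cdet B := by
  rw [cdet, hφ.prod_vecMul_eq_sum h fun k => k, hφ.sum_prod_mul_eq_prod_mul_sum_perm]
  simp only [List.ofFn_eq_map]

theorem vecMul_anticomm {κ κ' : Type*} {M : Matrix ι κ S} {N : Matrix ι κ' S}
    (hφ : IsGrassmann φ) (hM : ∀ i j k, Commute (φ i) (M j k))
    (hN : ∀ i j k, Commute (φ i) (N j k)) (hMN : ∀ i j k l, Commute (M i j) (N k l))
    (k : κ) (l : κ') : (φ ᵥ* M) k * (φ ᵥ* N) l = -((φ ᵥ* N) l * (φ ᵥ* M) k) := by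
  rw [vecMul_apply_mul_vecMul_apply hM, vecMul_apply_mul_vecMul_apply hN, Finset.sum_comm]
  simp only [← Finset.sum_neg_distrib]
  refine Finset.sum_congr rfl fun j _ => Finset.sum_congr rfl fun i _ => ?_
  rw [hφ.anticomm i j, (hMN i k j l).eq, neg_mul]

theorem anticomm_vecMul {κ : Type*} {M : Matrix ι κ S} (hφ : IsGrassmann φ)
    (hM : ∀ i j k, Commute (φ i) (M j k)) (i : ι) (j : κ) :
    φ i * (φ ᵥ* M) j = -((φ ᵥ* M) j * φ i) := by
  classical
  simpa only [Matrix.vecMul_one] using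
    hφ.vecMul_anticomm (M := 1) (fun i j k => (commute_one_apply j k (φ i)).symm) hM
      (fun i j k l => commute_one_apply i j (M k l)) i j

theorem vecMul {φ : Fin m → S} {M : Matrix (Fin m) (Fin m) S} (hφ : IsGrassmann φ)
    (hM : RightQuantum M) (hφM : ∀ i j k, Commute (φ i) (M j k)) : IsGrassmann (φ ᵥ* M) := by
  have mul_self (k : Fin m) : (φ ᵥ* M) k * (φ ᵥ* M) k = 0 := by
    rw [vecMul_apply_mul_vecMul_apply hφM]
    exact hφ.sum_sum_mul_eq_zero_of_symm _ fun i j => hM.1 j i k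
  refine ⟨mul_self, fun k l => ?_⟩
  obtain rfl | hkl := eq_or_ne k l
  · rw [mul_self, neg_zero]
  have symm (i j : Fin m) : M i k * M j l + M i l * M j k = M j k * M i l + M j l * M i k := by
    rw [add_comm (M j k * M i l), ← sub_eq_sub_iff_add_eq_add]
    exact hM.2 i j k l hkl
  rw [eq_neg_iff_add_eq_zero, vecMul_apply_mul_vecMul_apply hφM, vecMul_apply_mul_vecMul_apply hφM]
  simp only [← Finset.sum_add_distrib, ← mul_add]
  exact hφ.sum_sum_mul_eq_zero_of_symm _ symm

theorem prod_mul_cdet_mul {φ : Fin m → S} {M C : Matrix (Fin m) (Fin m) S} (hφ : IsGrassmann φ)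
    (hM : RightQuantum M) (hφM : ∀ i j k, Commute (φ i) (M j k))
    (hφC : ∀ i j k, Commute (φ i) (C j k)) (hMC : ∀ i j k l, Commute (M i j) ((M * C) k l)) :
    (List.ofFn φ).prod * cdet (M * C) = (List.ofFn φ).prod * (cdet M * cdet C) := by
  have hφMC (i j k : Fin m) : Commute (φ i) ((M * C) j k) := by
    rw [Matrix.mul_apply]
    exact Commute.sum_right _ _ _ fun l _ => (hφM i j l).mul_right (hφC i l k)
  have anticomm_C (k l : Fin m) :
      (φ ᵥ* M) k * ((φ ᵥ* M) ᵥ* C) l = -(((φ ᵥ* M) ᵥ* C) l * (φ ᵥ* M) k) := by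
    rw [Matrix.vecMul_vecMul]
    exact hφ.vecMul_anticomm hφM hφMC hMC k l
  calc (List.ofFn φ).prod * cdet (M * C)
      = (List.ofFn (φ ᵥ* (M * C))).prod := (hφ.prod_vecMul (hφ.anticomm_vecMul hφMC)).symm
    _ = (List.ofFn ((φ ᵥ* M) ᵥ* C)).prod := by rw [Matrix.vecMul_vecMul]
    _ = (List.ofFn (φ ᵥ* M)).prod * cdet C := (hφ.vecMul hM hφM).prod_vecMul anticomm_C
    _ = (List.ofFn φ).prod * (cdet M * cdet C) := by
      rw [hφ.prod_vecMul (hφ.anticomm_vecMul hφM), mul_assoc]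

end IsGrassmann

theorem isGrassmann_exteriorAlgebra_ι {ι K N : Type*} [CommRing K] [AddCommGroup N] [Module K N]
    (v : ι → N) : IsGrassmann fun i => ExteriorAlgebra.ι K (v i) where
  mul_self i := ExteriorAlgebra.ι_sq_zero (v i)
  anticomm i j := eq_neg_of_add_eq_zero_left (ExteriorAlgebra.ι_add_mul_swap (v i) (v j))

theorem exists_linearMap_prod_ι_basis_eq_one {K N : Type*} [CommRing K] [AddCommGroup N]
    [Module K N] (b : Module.Basis (Fin m) K N) :
    ∃ D : ExteriorAlgebra K N →ₗ[K] K,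
      D (List.ofFn fun i => ExteriorAlgebra.ι K (b i)).prod = 1 := by
  refine ⟨ExteriorAlgebra.liftAlternating (Pi.single m b.det), ?_⟩
  rw [← ExteriorAlgebra.ιMulti_apply, ExteriorAlgebra.liftAlternating_apply_ιMulti,
    Pi.single_eq_same, b.det_self]

/-- The ring `Λ(ℤᵐ) ⊗ R` obtained from `R` by adjoining `m` odd variables which commute with `R`. -/
abbrev GrassmannRing (R : Type*) [Ring R] (m : ℕ) : Type _ :=
  ExteriorAlgebra ℤ (Fin m → ℤ) ⊗[ℤ] R

namespace GrassmannRing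

/-- The inclusion of the coefficients into the Grassmann ring. -/
noncomputable def coeff (R : Type*) [Ring R] (m : ℕ) : R →+* GrassmannRing R m :=
  (Algebra.TensorProduct.includeRight :
    R →ₐ[ℤ] ExteriorAlgebra ℤ (Fin m → ℤ) ⊗[ℤ] R).toRingHom

/-- The adjoined odd variables. -/
noncomputable def var (R : Type*) [Ring R] (m : ℕ) (i : Fin m) : GrassmannRing R m :=
  ExteriorAlgebra.ι ℤ (Pi.basisFun ℤ (Fin m) i) ⊗ₜ 1

theorem commute_var_coeff (i : Fin m) (r : R) : Commute (var R m i) (coeff R m r) := by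
  simp [Commute, SemiconjBy, var, coeff]

theorem isGrassmann_var : IsGrassmann (var R m) :=
  (isGrassmann_exteriorAlgebra_ι (Pi.basisFun ℤ (Fin m))).map
    (Algebra.TensorProduct.includeLeft :
      ExteriorAlgebra ℤ (Fin m → ℤ) →ₐ[ℤ] GrassmannRing R m).toRingHom

theorem prod_var_mul_coeff (r : R) :
    (List.ofFn (var R m)).prod * coeff R m r =
      (List.ofFn fun i => ExteriorAlgebra.ι ℤ (Pi.basisFun ℤ (Fin m) i)).prod ⊗ₜ r := by
  have prod_var : (List.ofFn (var R m)).prod =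
      (List.ofFn fun i => ExteriorAlgebra.ι ℤ (Pi.basisFun ℤ (Fin m) i)).prod ⊗ₜ (1 : R) := by
    have h := map_list_prod (Algebra.TensorProduct.includeLeft :
      ExteriorAlgebra ℤ (Fin m → ℤ) →ₐ[ℤ] GrassmannRing R m)
      (List.ofFn fun i => ExteriorAlgebra.ι ℤ (Pi.basisFun ℤ (Fin m) i))
    rw [List.map_ofFn] at h
    exact h.symm
  rw [prod_var]
  simp [coeff]

theorem prod_var_mul_coeff_injective :
    Function.Injective fun r : R => (List.ofFn (var R m)).prod * coeff R m r := by
  intro r s hrs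
  obtain ⟨D, hD⟩ := exists_linearMap_prod_ι_basis_eq_one (Pi.basisFun ℤ (Fin m))
  have h := congrArg (fun x => TensorProduct.lid ℤ R (D.rTensor R x)) hrs
  simpa only [prod_var_mul_coeff, LinearMap.rTensor_tmul, hD, TensorProduct.lid_tmul, one_smul]
    using h

end GrassmannRing

theorem RightQuantum.cdet_mul_of_commute {M C : Matrix (Fin m) (Fin m) R} (hM : RightQuantum M)
    (hMC : ∀ i j k l, Commute (M i j) ((M * C) k l)) : cdet (M * C) = cdet M * cdet C := by
  let f := GrassmannRing.coeff R m
  apply GrassmannRing.prod_var_mul_coeff_injective (m := m)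
  have hcomm (i j k l : Fin m) : Commute (M.map f i j) ((M.map f * C.map f) k l) := by
    rw [← Matrix.map_mul]
    exact (hMC i j k l).map f
  have h := GrassmannRing.isGrassmann_var.prod_mul_cdet_mul (C := C.map f) (hM.map f)
    (fun i _ _ => GrassmannRing.commute_var_coeff i _)
    (fun i _ _ => GrassmannRing.commute_var_coeff i _) hcomm
  rwa [← Matrix.map_mul, cdet_map, cdet_map, cdet_map, ← map_mul] at h

theorem cdet_inverse_general {M C : Matrix (Fin m) (Fin m) R} (hM : RightQuantum M)
    (hMC : M * C = 1) : cdet M * cdet C = 1 := by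
  rw [← hM.cdet_mul_of_commute fun i j k l => hMC ▸ (commute_one_apply k l (M i j)).symm, hMC,
    cdet_one]

theorem cdet_inverse (hm : 1 ≤ m)
    (A : Matrix (Fin m) (Fin m) R) (hA : RightQuantum A)
    (C : Matrix (Fin m) (Fin m) R) (hC₁ : (1 - A) * C = 1) (hC₂ : C * (1 - A) = 1) :
    cdet (1 - A) * cdet C = 1 :=
  cdet_inverse_general hA.one_sub hC₁
end
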